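/- arXiv:1501.07724 — 3 statements merged into one kernel-verified Lean document; each statement's English description precedes it below -/
import Mathlib

section
/- Let G be a compact Hausdorff topological group acting continuously on a topological space X with X^G ≠ ∅. Then max{cat(X), cat_G(X)} ≤ TC^G(X). -/
open Set unitInterval

namespace PaperTC

variable {G X : Type*}

/-- The orbit of `x` under the action `act`. -/
def orbit (act : G → X → X) (x : X) : Set X := {y | ∃ g, act g x = y}

/-- The fixed point set of the action `act`. -/
def fixedSet (act : G → X → X) : Set X := {x | ∀ g, act g x = x}

/-- The fixed point set of a subset `S` of the acting group. -/
def fixedSetOf (act : G → X → X) (S : Set G) : Set X := {x | ∀ g ∈ S, act g x = x}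

/-- `minCover P` is the least `k ≥ 1` satisfying `P k`, as an element of `ℕ∞`
(equal to `∞` if there is no such `k`). -/
noncomputable def minCover (P : ℕ → Prop) : ℕ∞ :=
  sInf {k : ℕ∞ | ∃ m : ℕ, k = m ∧ 1 ≤ m ∧ P m}

section Plain

variable (Y : Type*) [TopologicalSpace Y]

/-- `Y × Y` can be covered by `k` open sets each admitting a motion planner. -/
def TCcover (k : ℕ) : Prop :=
  ∃ U : Fin k → Set (Y × Y),
    (∀ i, IsOpen (U i)) ∧ (⋃ i, U i) = univ ∧
    ∀ i, ∃ s : Y × Y → C(I, Y),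
      ContinuousOn s (U i) ∧ ∀ p ∈ U i, s p 0 = p.1 ∧ s p 1 = p.2

/-- Topological complexity (non-reduced, possibly infinite). -/
noncomputable def TC : ℕ∞ := minCover (TCcover Y)

/-- `Y` can be covered by `k` open sets, each of which can be deformed within `Y`
to a point. -/
def catCover (k : ℕ) : Prop :=
  ∃ U : Fin k → Set Y,
    (∀ i, IsOpen (U i)) ∧ (⋃ i, U i) = univ ∧
    ∀ i, ∃ H : Y × I → Y,
      ContinuousOn H (U i ×ˢ (univ : Set I)) ∧ (∀ x ∈ U i, H (x, 0) = x) ∧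
      ∃ y₀, ∀ x ∈ U i, H (x, 1) = y₀

/-- Non-reduced Lusternik–Schnirelmann category. -/
noncomputable def cat : ℕ∞ := minCover (catCover Y)

end Plain

section Equivariant

variable [TopologicalSpace X] (act : G → X → X)

/-- `X × X` can be covered by `k` invariant open sets each admitting an
equivariant motion planner. -/
def eqTCcover (k : ℕ) : Prop :=
  ∃ U : Fin k → Set (X × X),
    (∀ i, IsOpen (U i)) ∧ (⋃ i, U i) = univ ∧
    ∀ i, (∀ g p, p ∈ U i → (act g p.1, act g p.2) ∈ U i) ∧
      ∃ s : X × X → C(I, X),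
        ContinuousOn s (U i) ∧
        (∀ p ∈ U i, s p 0 = p.1 ∧ s p 1 = p.2) ∧
        (∀ g p, p ∈ U i → ∀ t : I, s (act g p.1, act g p.2) t = act g (s p t))

/-- Equivariant topological complexity `TC_G` of Colman and Grant. -/
noncomputable def eqTC : ℕ∞ := minCover (eqTCcover act)

/-- `X × X` can be covered by `k` `(G × G)`-invariant open sets, each admitting a
`(G × G)`-equivariant section of `π^G : P X ×_{X/G} P X → X × X`; such a section is
recorded by a pair of paths `s₁ p`, `s₂ p`, with the orbit of the endpoint of the first
equal to the orbit of the starting point of the second. -/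
def invTCcover (k : ℕ) : Prop :=
  ∃ U : Fin k → Set (X × X),
    (∀ i, IsOpen (U i)) ∧ (⋃ i, U i) = univ ∧
    ∀ i, (∀ g₁ g₂ : G, ∀ p, p ∈ U i → (act g₁ p.1, act g₂ p.2) ∈ U i) ∧
      ∃ s₁ s₂ : X × X → C(I, X),
        ContinuousOn s₁ (U i) ∧ ContinuousOn s₂ (U i) ∧
        (∀ p ∈ U i, s₁ p 0 = p.1 ∧ s₂ p 1 = p.2 ∧
          orbit act (s₁ p 1) = orbit act (s₂ p 0)) ∧
        (∀ g₁ g₂ : G, ∀ p, p ∈ U i → ∀ t : I,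
          s₁ (act g₁ p.1, act g₂ p.2) t = act g₁ (s₁ p t) ∧
          s₂ (act g₁ p.1, act g₂ p.2) t = act g₂ (s₂ p t))

/-- Invariant topological complexity `TC^G` of Lubawski and Marzantowicz. -/
noncomputable def invTC : ℕ∞ := minCover (invTCcover act)

/-- The invariant open set `U` is `G`-compressible into `A`: the inclusion `U ↪ X` is
`G`-equivariantly homotopic to a `G`-map with values in `A`. -/
def GCompressible (A : Set X) (U : Set X) : Prop :=
  (∀ g x, x ∈ U → act g x ∈ U) ∧
  ∃ H : X × I → X,
    ContinuousOn H (U ×ˢ (univ : Set I)) ∧ (∀ x ∈ U, H (x, 0) = x) ∧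
    (∀ g x, x ∈ U → ∀ t : I, H (act g x, t) = act g (H (x, t))) ∧
    (∀ x ∈ U, H (x, 1) ∈ A)

/-- A `G`-categorical set: compressible into a single orbit. -/
def GCategorical (U : Set X) : Prop :=
  ∃ x₀ : X, GCompressible act (orbit act x₀) U

/-- `X` can be covered by `k` open `G`-categorical sets. -/
def catGCover (k : ℕ) : Prop :=
  ∃ U : Fin k → Set X,
    (∀ i, IsOpen (U i)) ∧ (⋃ i, U i) = univ ∧ ∀ i, GCategorical act (U i)

/-- Equivariant Lusternik–Schnirelmann category `cat_G`. -/
noncomputable def catG : ℕ∞ := minCover (catGCover act)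

/-- `X` can be covered by `k` open sets `G`-compressible into `{star}`. -/
def pointedCatGCover (star : X) (k : ℕ) : Prop :=
  ∃ U : Fin k → Set X,
    (∀ i, IsOpen (U i)) ∧ (⋃ i, U i) = univ ∧
    ∀ i, GCompressible act {star} (U i)

/-- The pointed equivariant category `_{{⋆}}cat_G(X)`. -/
noncomputable def pointedCatG (star : X) : ℕ∞ := minCover (pointedCatGCover act star)

/-- `X` is `G`-contractible: the identity is `G`-homotopic to a map with values in a
single orbit. -/
def GContractible : Prop :=
  ∃ H : X × I → X,
    Continuous H ∧ (∀ x, H (x, 0) = x) ∧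
    (∀ g x, ∀ t : I, H (act g x, t) = act g (H (x, t))) ∧
    ∃ x₀ : X, ∀ x, H (x, 1) ∈ orbit act x₀

end Equivariant

/-- The orbit space `X/G` with the quotient topology. -/
abbrev OrbitSpace (act : G → X → X) : Type _ := Quot (fun x y => ∃ g, act g x = y)

end PaperTC

open PaperTC

/-! Restrict a `(G × G)`-equivariant section `(γ, δ)` of `π^G` to the slice `X × {a}` through a fixed
point `a`. For every `g`, the pair `(1, g)` fixes `(x, a)`, so `δ` runs through fixed points. An
orbit containing a fixed point is a singleton, so `γ` ends exactly where `δ` starts, and traversing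
`γ` and then `δ` deforms the slice equivariantly to `a`. Such a deformation serves both for `cat`
(forget equivariance) and for `cat_G` (the point `a` lies in an orbit). -/

namespace PaperTC

open ContinuousMap Function

theorem minCover_anti {P Q : ℕ → Prop} (h : ∀ k, P k → Q k) : minCover Q ≤ minCover P :=
  sInf_le_sInf fun _ ⟨m, hm, one_le, hP⟩ => ⟨m, hm, one_le, h m hP⟩

section Orbit

variable {G X : Type*} {act : G → X → X}

theorem mem_orbit_self [One G] (act_one : ∀ x, act 1 x = x) (x : X) : x ∈ orbit act x :=
  ⟨1, act_one x⟩

theorem eq_of_mem_orbit_of_mem_fixedSet {x y : X} (hx : x ∈ fixedSet act)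
    (hy : y ∈ orbit act x) : y = x := by
  obtain ⟨g, rfl⟩ := hy
  exact hx g

end Orbit

section EquivariantHomotopy

variable {G X Y : Type*} [TopologicalSpace X] [TopologicalSpace Y]

/-- A homotopy from `f₀` to `f₁` through maps intertwining the families of self-maps `actY` of `Y`
and `actX` of `X`; when these are `G`-actions, this is a `G`-equivariant homotopy. It is an instance
of `ContinuousMap.HomotopyWith` so that concatenation is available as `HomotopyWith.trans`. -/
abbrev EquivariantHomotopy (actY : G → Y → Y) (actX : G → X → X) (f₀ f₁ : C(Y, X)) : Type _ :=
  HomotopyWith f₀ f₁ fun f => ∀ g, Semiconj f (actY g) (actX g)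

/-- The equivariant homotopy tracing out an equivariant continuous family of paths `φ y` from
`f₀ y` to `f₁ y`. -/
def EquivariantHomotopy.ofPaths {actY : G → Y → Y} {actX : G → X → X} {f₀ f₁ : C(Y, X)}
    (φ : C(Y, C(I, X))) (zero : ∀ y, φ y 0 = f₀ y) (one : ∀ y, φ y 1 = f₁ y)
    (equivariant : ∀ g y t, φ (actY g y) t = actX g (φ y t)) :
    EquivariantHomotopy actY actX f₀ f₁ where
  toContinuousMap := φ.uncurry.comp .prodSwap
  map_zero_left := zero
  map_one_left := one
  prop' t g y := equivariant g y t

end EquivariantHomotopy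

section GCompressible

variable {G X : Type*} [TopologicalSpace X] {act : G → X → X}

theorem GCompressible.mono {A B U : Set X} (hAB : A ⊆ B) (hU : GCompressible act A U) :
    GCompressible act B U := by
  obtain ⟨act_mem, H, H_cont, H_zero, H_act, H_one⟩ := hU
  exact ⟨act_mem, H, H_cont, H_zero, H_act, fun x hx => hAB (H_one x hx)⟩

theorem EquivariantHomotopy.gCompressible {A U : Set X} {f : C(U, X)}
    (hU : ∀ g, MapsTo (act g) U U)
    (F : EquivariantHomotopy (fun g => (hU g).restrict (act g) U U) act
      ⟨Subtype.val, continuous_subtype_val⟩ f)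
    (hf : ∀ x, f x ∈ A) : GCompressible act A U := by
  classical
  -- `GCompressible` asks for a map on all of `X × I`; its values off `U ×ˢ univ` are irrelevant.
  let H : X × I → X := fun p => if hp : p.1 ∈ U then F (p.2, ⟨p.1, hp⟩) else p.1
  have H_eq (x : U) (t : I) : H (x, t) = F (t, x) := dif_pos x.2
  refine ⟨fun g _ hx => hU g hx, H, ?_, fun x hx => ?_, fun g x hx t => ?_, fun x hx => ?_⟩
  · rw [continuousOn_iff_continuous_domRestrict]
    have H_restrict : (U ×ˢ univ).domRestrict H = fun p => F (p.1.2, ⟨p.1.1, p.2.1⟩) :=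
      funext fun p => H_eq ⟨p.1.1, p.2.1⟩ p.1.2
    rw [H_restrict]
    fun_prop
  · exact (H_eq ⟨x, hx⟩ 0).trans (F.apply_zero _)
  · rw [H_eq ⟨x, hx⟩ t, H_eq ⟨act g x, hU g hx⟩ t]
    exact F.prop t g ⟨x, hx⟩
  · rw [H_eq ⟨x, hx⟩ 1, F.apply_one]
    exact hf ⟨x, hx⟩

end GCompressible

section InvariantPlanner

variable {G X : Type*} [TopologicalSpace X]

/-- The pair `(s₁, s₂)` is a `(G × G)`-equivariant section of `π^G` over the `(G × G)`-invariant set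
`V`: the condition imposed on each member of a cover in `invTCcover`. -/
structure IsInvariantPlanner (act : G → X → X) (V : Set (X × X)) (s₁ s₂ : X × X → C(I, X)) :
    Prop where
  act_mem : ∀ g₁ g₂, ∀ p ∈ V, (act g₁ p.1, act g₂ p.2) ∈ V
  continuousOn_fst : ContinuousOn s₁ V
  continuousOn_snd : ContinuousOn s₂ V
  fst_zero : ∀ p ∈ V, s₁ p 0 = p.1
  snd_one : ∀ p ∈ V, s₂ p 1 = p.2
  orbit_eq : ∀ p ∈ V, orbit act (s₁ p 1) = orbit act (s₂ p 0)
  fst_act : ∀ g₁ g₂, ∀ p ∈ V, ∀ t, s₁ (act g₁ p.1, act g₂ p.2) t = act g₁ (s₁ p t)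
  snd_act : ∀ g₁ g₂, ∀ p ∈ V, ∀ t, s₂ (act g₁ p.1, act g₂ p.2) t = act g₂ (s₂ p t)

/-- The continuous family of paths `s (x, a)`, indexed by the `x` with `(x, a) ∈ V`: one leg of the
deformation of the slice of `V` through `a`. -/
def slicePaths {V : Set (X × X)} {s : X × X → C(I, X)} (hs : ContinuousOn s V) (a : X) :
    C((·, a) ⁻¹' V, C(I, X)) where
  toFun x := s (x, a)
  continuous_toFun := hs.comp_continuous (by fun_prop) fun x => x.2

namespace IsInvariantPlanner

variable {act : G → X → X} {V : Set (X × X)} {s₁ s₂ : X × X → C(I, X)} {a x : X}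

theorem snd_mem_fixedSet [One G] (h : IsInvariantPlanner act V s₁ s₂)
    (act_one : ∀ x, act 1 x = x) (ha : a ∈ fixedSet act) (hx : (x, a) ∈ V) (t : I) :
    s₂ (x, a) t ∈ fixedSet act := fun g =>
  calc act g (s₂ (x, a) t) = s₂ (act 1 x, act g a) t := (h.snd_act 1 g _ hx t).symm
    _ = s₂ (x, a) t := by rw [act_one, ha g]

theorem fst_one_eq_snd_zero [One G] (h : IsInvariantPlanner act V s₁ s₂)
    (act_one : ∀ x, act 1 x = x) (ha : a ∈ fixedSet act) (hx : (x, a) ∈ V) :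
    s₁ (x, a) 1 = s₂ (x, a) 0 :=
  eq_of_mem_orbit_of_mem_fixedSet (h.snd_mem_fixedSet act_one ha hx 0)
    (h.orbit_eq _ hx ▸ mem_orbit_self act_one _)

theorem gCompressible_slice [One G] (h : IsInvariantPlanner act V s₁ s₂)
    (act_one : ∀ x, act 1 x = x) (ha : a ∈ fixedSet act) :
    GCompressible act {a} ((·, a) ⁻¹' V) := by
  let U : Set X := (·, a) ⁻¹' V
  -- As `a` is fixed, the diagonal of `G × G` preserves the slice `X × {a}` of `V`.
  have act_prod (g : G) (x : X) : (act g x, a) = (act g x, act g a) := by rw [ha g]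
  have hU (g : G) : MapsTo (act g) U U := fun x hx => by
    simpa only [U, mem_preimage, act_prod] using h.act_mem g g _ hx
  let actU (g : G) : U → U := (hU g).restrict (act g) U U
  let midpoint : C(U, X) :=
    (⟨fun γ => γ 1, continuous_eval_const 1⟩ : C(C(I, X), X)).comp
      (slicePaths h.continuousOn_fst a)
  let F₁ : EquivariantHomotopy actU act ⟨Subtype.val, continuous_subtype_val⟩ midpoint :=
    .ofPaths (slicePaths h.continuousOn_fst a) (fun x => h.fst_zero _ x.2) (fun _ => rfl)
      fun g x t => (congrArg (s₁ · t) (act_prod g x)).trans (h.fst_act g g _ x.2 t)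
  let F₂ : EquivariantHomotopy actU act midpoint (.const U a) :=
    .ofPaths (slicePaths h.continuousOn_snd a)
      (fun x => (h.fst_one_eq_snd_zero act_one ha x.2).symm) (fun x => h.snd_one _ x.2)
      fun g x t => (congrArg (s₂ · t) (act_prod g x)).trans (h.snd_act g g _ x.2 t)
  exact EquivariantHomotopy.gCompressible hU (F₁.trans F₂) fun _ => rfl

end IsInvariantPlanner

end InvariantPlanner

section Inequalities

variable {G X : Type*} [TopologicalSpace X] (act : G → X → X)

theorem cat_le_pointedCatG (a : X) : cat X ≤ pointedCatG act a := by
  refine minCover_anti fun k ⟨U, U_open, U_cover, hU⟩ => ⟨U, U_open, U_cover, fun i => ?_⟩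
  obtain ⟨-, H, H_cont, H_zero, -, H_one⟩ := hU i
  exact ⟨H, H_cont, H_zero, a, H_one⟩

variable {act} [One G]

theorem catG_le_pointedCatG (act_one : ∀ x, act 1 x = x) (a : X) :
    catG act ≤ pointedCatG act a :=
  minCover_anti fun _ ⟨U, U_open, U_cover, hU⟩ => ⟨U, U_open, U_cover, fun i =>
    ⟨a, (hU i).mono (singleton_subset_iff.2 (mem_orbit_self act_one a))⟩⟩

theorem pointedCatG_le_invTC (act_one : ∀ x, act 1 x = x) {a : X} (ha : a ∈ fixedSet act) :
    pointedCatG act a ≤ invTC act := by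
  refine minCover_anti fun k ⟨V, V_open, V_cover, hV⟩ =>
    ⟨fun i => (·, a) ⁻¹' V i, fun i => (V_open i).preimage (by fun_prop), ?_, fun i => ?_⟩
  · rw [← preimage_iUnion, V_cover, preimage_univ]
  · obtain ⟨act_mem, s₁, s₂, cont₁, cont₂, ends, s_act⟩ := hV i
    have planner : IsInvariantPlanner act (V i) s₁ s₂ :=
      { act_mem
        continuousOn_fst := cont₁
        continuousOn_snd := cont₂
        fst_zero := fun p hp => (ends p hp).1
        snd_one := fun p hp => (ends p hp).2.1
        orbit_eq := fun p hp => (ends p hp).2.2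
        fst_act := fun g₁ g₂ p hp t => (s_act g₁ g₂ p hp t).1
        snd_act := fun g₁ g₂ p hp t => (s_act g₁ g₂ p hp t).2 }
    exact planner.gCompressible_slice act_one ha

end Inequalities

end PaperTC

theorem max_cat_catG_le_invTC_general {G X : Type*} [Monoid G] [MulAction G X] [TopologicalSpace X]
    (hfix : (fixedSet fun (g : G) (x : X) => g • x).Nonempty) :
    max (cat X) (catG fun (g : G) (x : X) => g • x) ≤ invTC fun (g : G) (x : X) => g • x := by
  obtain ⟨a, ha⟩ := hfix
  calc max (cat X) (catG fun (g : G) (x : X) => g • x)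
      ≤ pointedCatG (fun (g : G) (x : X) => g • x) a :=
        max_le (cat_le_pointedCatG _ a) (catG_le_pointedCatG (one_smul G) a)
    _ ≤ invTC fun (g : G) (x : X) => g • x := pointedCatG_le_invTC (one_smul G) ha

/-- For a compact Hausdorff topological group `G` acting continuously on a
space `X` with `X^G ≠ ∅`, both the Lusternik–Schnirelmann category of `X` and its
equivariant category bound the invariant topological complexity from below. -/
theorem max_cat_catG_le_invTC {G X : Type*} [Group G] [TopologicalSpace G]
    [IsTopologicalGroup G] [CompactSpace G] [T2Space G] [TopologicalSpace X]
    (act : G → X → X)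
    (act_one : ∀ x, act 1 x = x)
    (act_mul : ∀ g h x, act (g * h) x = act g (act h x))
    (act_cont : Continuous fun p : G × X => act p.1 p.2)
    (hfix : (fixedSet act).Nonempty) :
    max (cat X) (catG act) ≤ invTC act := by
  let _ : MulAction G X := { smul := act, one_smul := act_one, mul_smul := act_mul }
  exact max_cat_catG_le_invTC_general hfix
end

section
/- Let G = ℤ/2 ⊕ ℤ/2 with generators a and b, and let X = S¹ ∖ {(0,1), (0,−1)} ⊆ ℝ², with the G-action determined by a·(x,y) = (−x,y) and b·(x,y) = (x,−y). Then TC^G(X) = 1 (indeed X is G-contractible), while the fixed point set X^{⟨b⟩} = {(1,0), (−1,0)} is not path-connected, so TC(X^{⟨b⟩}) = ∞. In particular, a space need not be G-connected for TC^G to be finite, and TC(X^H) ≤ TC^G(X) fails in general. -/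
open Set unitInterval

namespace PaperTC

/-- The circle `S¹ ⊆ ℝ²` with the north and south poles removed. -/
def X4 : Set (ℝ × ℝ) := {p | p.1 ^ 2 + p.2 ^ 2 = 1 ∧ p ≠ (0, 1) ∧ p ≠ (0, -1)}

/-- The sign `±1` attached to an element of `ℤ/2`. -/
noncomputable def sgn (a : ZMod 2) : ℝ := if a = 0 then 1 else -1

lemma sgn_cases (a : ZMod 2) : sgn a = 1 ∨ sgn a = -1 := by
  unfold sgn; split <;> simp

lemma X4_mem {p : ℝ × ℝ} (hp : p ∈ X4) {s t : ℝ}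
    (hs : s = 1 ∨ s = -1) (ht : t = 1 ∨ t = -1) : (s * p.1, t * p.2) ∈ X4 := by
  obtain ⟨h1, h2, h3⟩ := hp
  rw [Ne, Prod.ext_iff] at h2 h3
  push_neg at h2 h3
  dsimp only at h2 h3
  refine ⟨?_, ?_, ?_⟩
  · dsimp only
    rcases hs with rfl | rfl <;> rcases ht with rfl | rfl <;> nlinarith [h1]
  · rw [Ne, Prod.ext_iff]; push_neg
    intro h0 h1'
    dsimp only at h0 h1'
    have hp1 : p.1 = 0 := by rcases hs with rfl | rfl <;> linarith
    rcases ht with rfl | rfl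
    · exact h2 hp1 (by linarith)
    · exact h3 hp1 (by linarith)
  · rw [Ne, Prod.ext_iff]; push_neg
    intro h0 h1'
    dsimp only at h0 h1'
    have hp1 : p.1 = 0 := by rcases hs with rfl | rfl <;> linarith
    rcases ht with rfl | rfl
    · exact h3 hp1 (by linarith)
    · exact h2 hp1 (by linarith)

/-- The action of `ℤ/2 ⊕ ℤ/2` on `X4`: the first generator `a = (1,0)` negates the first
coordinate, the second generator `b = (0,1)` negates the second coordinate. -/
noncomputable def act4 : ZMod 2 × ZMod 2 → ↥X4 → ↥X4 := fun g x =>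
  ⟨(sgn g.1 * (x : ℝ × ℝ).1, sgn g.2 * (x : ℝ × ℝ).2),
    X4_mem x.2 (sgn_cases g.1) (sgn_cases g.2)⟩

/-- The fixed point set of the subgroup `⟨b⟩` generated by `b = (0,1)`. -/
noncomputable def fixB : Set ↥X4 :=
  fixedSetOf act4
    (AddSubgroup.zmultiples ((0, 1) : ZMod 2 × ZMod 2) : Set (ZMod 2 × ZMod 2))

/-! Scaling the second coordinate by `1 - t` and projecting radially back to the circle contracts
`X` to `{(1,0), (-1,0)}`, a single orbit. Both operations commute with sign changes of the
coordinates, so the contraction is equivariant; running it forwards from `x` and backwards to `y`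
gives a global section of `π^G`. On the other hand, the first coordinate never vanishes on `X`, so
by the intermediate value theorem no path in `X` joins `(1,0)` to `(-1,0)`. -/

section MinCover

variable {P : ℕ → Prop}

lemma one_le_minCover : 1 ≤ minCover P := by
  refine le_sInf ?_
  rintro _ ⟨m, rfl, hm, -⟩
  exact_mod_cast hm

lemma minCover_eq_one (h : P 1) : minCover P = 1 :=
  le_antisymm (sInf_le ⟨1, Nat.cast_one.symm, le_rfl, h⟩) one_le_minCover

lemma minCover_eq_top (h : ∀ k, ¬ P k) : minCover P = ⊤ := by
  refine sInf_eq_top.mpr ?_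
  rintro _ ⟨m, -, -, hm⟩
  exact absurd hm (h m)

end MinCover

section Plain

variable {Y : Type*} [TopologicalSpace Y]

lemma TCcover.joined {k : ℕ} (h : TCcover Y k) (x y : Y) : Joined x y := by
  obtain ⟨U, -, hcover, hplanner⟩ := h
  obtain ⟨i, hi⟩ := mem_iUnion.mp (hcover ▸ mem_univ (x, y))
  obtain ⟨s, -, hs⟩ := hplanner i
  exact ⟨⟨s (x, y), (hs _ hi).1, (hs _ hi).2⟩⟩

theorem TC_eq_top_of_not_pathConnectedSpace [Nonempty Y] (h : ¬ PathConnectedSpace Y) :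
    TC Y = ⊤ :=
  minCover_eq_top fun _ hk => h ⟨‹_›, hk.joined⟩

end Plain

section AddAction

variable {G X : Type*} [AddGroup G] [AddAction G X]

lemma orbit_vadd_eq_of_mem {x y : X} (h : y ∈ orbit (fun g : G => (g +ᵥ · : X → X)) x) :
    orbit (fun g : G => (g +ᵥ · : X → X)) y = orbit (fun g : G => (g +ᵥ · : X → X)) x :=
  AddAction.orbit_eq_iff.mpr h

lemma mem_fixedSetOf_zmultiples {g : G} {x : X} :
    x ∈ fixedSetOf (fun g : G => (g +ᵥ · : X → X)) (AddSubgroup.zmultiples g : Set G) ↔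
      g +ᵥ x = x :=
  AddSubgroup.zmultiples_le (H := AddAction.stabilizer G x)

variable [TopologicalSpace X]

theorem GContractible.invTC_eq_one (h : GContractible (fun g : G => (g +ᵥ · : X → X))) :
    invTC (fun g : G => (g +ᵥ · : X → X)) = 1 := by
  obtain ⟨H, hcont, hzero, hequiv, x₀, hone⟩ := h
  let out : C((X × X) × I, X) := ⟨fun q => H (q.1.1, q.2), by fun_prop⟩
  let back : C((X × X) × I, X) := ⟨fun q => H (q.1.2, σ q.2), by fun_prop⟩
  refine minCover_eq_one ⟨fun _ => univ, fun _ => isOpen_univ, iUnion_const _, fun _ =>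
    ⟨fun _ _ _ _ => mem_univ _, out.curry, back.curry, out.curry.continuous.continuousOn,
      back.curry.continuous.continuousOn, fun p _ => ⟨hzero p.1, ?_, ?_⟩,
      fun g₁ g₂ p _ t => ⟨hequiv g₁ p.1 t, hequiv g₂ p.2 (σ t)⟩⟩⟩
  · simp only [back, ContinuousMap.curry_apply, ContinuousMap.coe_mk, symm_one, hzero]
  · simp only [out, back, ContinuousMap.curry_apply, ContinuousMap.coe_mk, symm_zero]
    exact (orbit_vadd_eq_of_mem (hone p.1)).trans (orbit_vadd_eq_of_mem (hone p.2)).symm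

end AddAction

/-- The radial projection of `ℝ² ∖ {0}` onto the unit circle for the Euclidean norm, written out by
hand because `ℝ × ℝ` carries the sup norm. -/
noncomputable def radialProj (p : ℝ × ℝ) : ℝ × ℝ := (√(p.1 ^ 2 + p.2 ^ 2))⁻¹ • p

lemma radialProj_of_sq_add_sq_eq_one {p : ℝ × ℝ} (hp : p.1 ^ 2 + p.2 ^ 2 = 1) :
    radialProj p = p := by
  rw [radialProj, hp, Real.sqrt_one, inv_one, one_smul]

lemma radialProj_mul {s : ℝ × ℝ} (hs : s ^ 2 = 1) (p : ℝ × ℝ) :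
    radialProj (s * p) = s * radialProj p := by
  have h₁ : s.1 ^ 2 = 1 := congrArg Prod.fst hs
  have h₂ : s.2 ^ 2 = 1 := congrArg Prod.snd hs
  have hnorm : (s * p).1 ^ 2 + (s * p).2 ^ 2 = p.1 ^ 2 + p.2 ^ 2 := by
    simp only [Prod.fst_mul, Prod.snd_mul, mul_pow, h₁, h₂, one_mul]
  rw [radialProj, hnorm, radialProj, mul_smul_comm]

lemma mem_X4_iff {p : ℝ × ℝ} : p ∈ X4 ↔ p.1 ^ 2 + p.2 ^ 2 = 1 ∧ p.1 ≠ 0 := by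
  refine ⟨fun ⟨hp, hnorth, hsouth⟩ => ⟨hp, fun h₁ => ?_⟩, fun ⟨hp, h₁⟩ => ⟨hp, ?_, ?_⟩⟩
  · have h₂ : p.2 ^ 2 = 1 := by simpa [h₁] using hp
    rcases sq_eq_one_iff.mp h₂ with h₂ | h₂
    · exact hnorth (Prod.ext h₁ h₂)
    · exact hsouth (Prod.ext h₁ h₂)
  all_goals rintro rfl; exact h₁ rfl

lemma X4.sq_add_sq_eq_one (x : X4) : x.1.1 ^ 2 + x.1.2 ^ 2 = 1 := (mem_X4_iff.mp x.2).1

lemma X4.fst_ne_zero (x : X4) : x.1.1 ≠ 0 := (mem_X4_iff.mp x.2).2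

lemma radialProj_mem_X4 {p : ℝ × ℝ} (hp : p.1 ≠ 0) : radialProj p ∈ X4 := by
  have hpos : 0 < p.1 ^ 2 + p.2 ^ 2 := by positivity
  refine mem_X4_iff.mpr ⟨?_, mul_ne_zero (by positivity) hp⟩
  simp only [radialProj, Prod.smul_fst, Prod.smul_snd, smul_eq_mul, mul_pow, inv_pow,
    Real.sq_sqrt hpos.le, ← mul_add]
  exact inv_mul_cancel₀ hpos.ne'

lemma sgn_add (a b : ZMod 2) : sgn (a + b) = sgn a * sgn b := by
  have hadd : ∀ a b : ZMod 2, a + b = 0 ↔ (a = 0 ↔ b = 0) := by decide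
  by_cases ha : a = 0 <;> by_cases hb : b = 0 <;> simp [sgn, hadd, ha, hb]

/-- The pair of signs by which `g` multiplies the coordinates. With the ring structure of `ℝ × ℝ`,
the action of `g` is multiplication by `signs g`. -/
noncomputable def signs (g : ZMod 2 × ZMod 2) : ℝ × ℝ := (sgn g.1, sgn g.2)

lemma signs_zero : signs 0 = 1 := by simp [signs, sgn]

lemma signs_add (g h : ZMod 2 × ZMod 2) : signs (g + h) = signs g * signs h := by
  simp [signs, sgn_add]

lemma signs_sq (g : ZMod 2 × ZMod 2) : signs g ^ 2 = 1 := by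
  rw [sq, ← signs_add, CharTwo.add_self_eq_zero, signs_zero]

lemma signs_a : signs (1, 0) = (-1, 1) := by simp [signs, sgn]

lemma signs_b : signs (0, 1) = (1, -1) := by simp [signs, sgn]

lemma coe_act4 (g : ZMod 2 × ZMod 2) (x : X4) : (act4 g x : ℝ × ℝ) = signs g * x := rfl

lemma act4_zero (x : X4) : act4 0 x = x :=
  Subtype.ext <| by rw [coe_act4, signs_zero, one_mul]

lemma act4_add (g h : ZMod 2 × ZMod 2) (x : X4) : act4 (g + h) x = act4 g (act4 h x) :=
  Subtype.ext <| by rw [coe_act4, coe_act4, coe_act4, signs_add, mul_assoc]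

noncomputable instance : AddAction (ZMod 2 × ZMod 2) X4 where
  vadd := act4
  zero_vadd := act4_zero
  add_vadd := act4_add

lemma continuous_act4 (g : ZMod 2 × ZMod 2) : Continuous (act4 g) :=
  Continuous.subtype_mk (by fun_prop) _

lemma coe_act4_a (x : X4) : (act4 (1, 0) x : ℝ × ℝ) = (-x.1.1, x.1.2) := by
  rw [coe_act4, signs_a]
  ext <;> simp

lemma coe_act4_b (x : X4) : (act4 (0, 1) x : ℝ × ℝ) = (x.1.1, -x.1.2) := by
  rw [coe_act4, signs_b]
  ext <;> simp

/-- The point `(1, 0)` of `X4`. -/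
def east : X4 := ⟨(1, 0), mem_X4_iff.mpr (by norm_num)⟩

/-- The point `(-1, 0)` of `X4`. -/
def west : X4 := ⟨(-1, 0), mem_X4_iff.mpr (by norm_num)⟩

lemma X4.snd_eq_zero_iff {x : X4} : x.1.2 = 0 ↔ x = east ∨ x = west := by
  refine ⟨fun h => ?_, ?_⟩
  · have hsq : x.1.1 ^ 2 = 1 := by simpa [h] using X4.sq_add_sq_eq_one x
    exact (sq_eq_one_iff.mp hsq).imp (fun h₁ => Subtype.ext (Prod.ext h₁ h))
      (fun h₁ => Subtype.ext (Prod.ext h₁ h))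
  · rintro (rfl | rfl) <;> rfl

lemma mem_orbit_east_of_snd_eq_zero {x : X4} (h : x.1.2 = 0) : x ∈ orbit act4 east := by
  rcases X4.snd_eq_zero_iff.mp h with rfl | rfl
  · exact ⟨0, act4_zero east⟩
  · refine ⟨(1, 0), Subtype.ext ?_⟩
    rw [coe_act4_a]
    simp [east, west]

/-- The deformation of `X4` into `{(1, 0), (-1, 0)}` scaling the second coordinate by `1 - t` and
projecting back to the circle. -/
noncomputable def flatten (q : X4 × I) : X4 :=
  ⟨radialProj ((1, 1 - (q.2 : ℝ)) * (q.1 : ℝ × ℝ)),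
    radialProj_mem_X4 (by simpa only [Prod.fst_mul, one_mul] using X4.fst_ne_zero q.1)⟩

lemma continuous_flatten : Continuous flatten := by
  have hne (q : X4 × I) : √(q.1.1.1 ^ 2 + ((1 - (q.2 : ℝ)) * q.1.1.2) ^ 2) ≠ 0 := by
    have := X4.fst_ne_zero q.1
    positivity
  refine Continuous.subtype_mk ?_ _
  simp only [radialProj, Prod.fst_mul, Prod.snd_mul, one_mul]
  fun_prop (disch := exact hne _)

lemma flatten_zero (x : X4) : flatten (x, 0) = x := by
  ext1
  simp [flatten, ← Prod.one_eq_mk, radialProj_of_sq_add_sq_eq_one (X4.sq_add_sq_eq_one x)]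

lemma flatten_act4 (g : ZMod 2 × ZMod 2) (x : X4) (t : I) :
    flatten (act4 g x, t) = act4 g (flatten (x, t)) := by
  ext1
  simp only [flatten, coe_act4]
  rw [mul_left_comm, radialProj_mul (signs_sq g)]

lemma snd_flatten_one (x : X4) : (flatten (x, 1) : ℝ × ℝ).2 = 0 := by
  simp [flatten, radialProj]

theorem gContractible_act4 : GContractible act4 :=
  ⟨flatten, continuous_flatten, flatten_zero, flatten_act4, east, fun x =>
    mem_orbit_east_of_snd_eq_zero (snd_flatten_one x)⟩

lemma mem_fixB_iff {x : X4} : x ∈ fixB ↔ x = east ∨ x = west := by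
  calc x ∈ fixB ↔ act4 (0, 1) x = x := mem_fixedSetOf_zmultiples
    _ ↔ x.1.2 = 0 := by
      rw [Subtype.ext_iff, coe_act4_b, Prod.ext_iff]
      exact (and_iff_right rfl).trans neg_eq_self
    _ ↔ x = east ∨ x = west := X4.snd_eq_zero_iff

lemma east_mem_fixB : east ∈ fixB := mem_fixB_iff.mpr (.inl rfl)

lemma west_mem_fixB : west ∈ fixB := mem_fixB_iff.mpr (.inr rfl)

lemma not_isPreconnected_of_east_west_mem {S : Set X4} (heast : east ∈ S) (hwest : west ∈ S) :
    ¬ IsPreconnected S := by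
  intro hS
  have hcont : ContinuousOn (fun x : X4 => x.1.1) S := by fun_prop
  obtain ⟨x, -, hx⟩ := hS.intermediate_value hwest heast hcont
    (show (0 : ℝ) ∈ Icc (-1) 1 by norm_num)
  exact X4.fst_ne_zero x hx

theorem not_isPathConnected_fixB : ¬ IsPathConnected fixB := fun h =>
  not_isPreconnected_of_east_west_mem east_mem_fixB west_mem_fixB h.isConnected.isPreconnected

theorem TC_fixB : TC fixB = ⊤ :=
  have : Nonempty fixB := ⟨⟨east, east_mem_fixB⟩⟩
  TC_eq_top_of_not_pathConnectedSpace
    (mt isPathConnected_iff_pathConnectedSpace.mpr not_isPathConnected_fixB)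

/-- For `G = ℤ/2 ⊕ ℤ/2 = ⟨a, b⟩` acting on `X = S¹ ∖ {(0,1), (0,-1)}` by
`a·(x,y) = (-x,y)` and `b·(x,y) = (x,-y)`: `act4` is a continuous action realizing these
formulas, `X` is `G`-contractible and `TC^G(X) = 1`, while the fixed point set of `⟨b⟩` is
the two-point set `{(1,0), (-1,0)}`, which is not path-connected, so `TC(X^{⟨b⟩}) = ∞`;
in particular `TC(X^H) ≤ TC^G(X)` fails in general. -/
theorem example_G_contractible_with_disconnected_fixed_set :
    (∀ x, act4 0 x = x) ∧
    (∀ g h x, act4 (g + h) x = act4 g (act4 h x)) ∧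
    (∀ g, Continuous (act4 g)) ∧
    (∀ x : ↥X4, (act4 (1, 0) x : ℝ × ℝ) = (-(x : ℝ × ℝ).1, (x : ℝ × ℝ).2)) ∧
    (∀ x : ↥X4, (act4 (0, 1) x : ℝ × ℝ) = ((x : ℝ × ℝ).1, -(x : ℝ × ℝ).2)) ∧
    GContractible act4 ∧
    invTC act4 = 1 ∧
    fixB = {x : ↥X4 | (x : ℝ × ℝ) = (1, 0) ∨ (x : ℝ × ℝ) = (-1, 0)} ∧
    ¬ IsPathConnected fixB ∧
    TC ↥fixB = ⊤ ∧
    ¬ TC ↥fixB ≤ invTC act4 := by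
  have hinvTC : invTC act4 = 1 := GContractible.invTC_eq_one gContractible_act4
  refine ⟨act4_zero, act4_add, continuous_act4, coe_act4_a, coe_act4_b, gContractible_act4,
    hinvTC, ?_, not_isPathConnected_fixB, TC_fixB, ?_⟩
  · ext x
    exact mem_fixB_iff.trans (or_congr Subtype.ext_iff Subtype.ext_iff)
  · rw [TC_fixB, hinvTC]
    exact not_le_of_gt (ENat.natCast_lt_top 1)

end PaperTC
end

section
/- Let G be a finite group acting linearly on the sphere S^n (n ≥ 1) via an orthogonal representation ρ : G → O(n+1), suppose S^n is G-connected and (S^n)^G ≠ ∅. Then 2 ≤ TC_G(S^n) ≤ 3. -/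
open Set unitInterval

namespace PaperTC

/-- The unit sphere `S^n ⊆ ℝ^{n+1}` (with the Euclidean metric). -/
abbrev Sph (n : ℕ) : Set (EuclideanSpace ℝ (Fin (n + 1))) := Metric.sphere 0 1

/-- The action of `G` on the unit sphere `S^n` obtained by restricting an orthogonal
representation of `G` on `ℝ^{n+1}`. -/
noncomputable def sphereAct {G : Type*} [Monoid G] {n : ℕ}
    (ρ : G →* (EuclideanSpace ℝ (Fin (n + 1)) ≃ₗᵢ[ℝ] EuclideanSpace ℝ (Fin (n + 1)))) :
    G → ↥(Sph n) → ↥(Sph n) := fun g x =>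
  ⟨ρ g x, mem_sphere_zero_iff_norm.mpr (by
    rw [(ρ g).norm_map]; exact mem_sphere_zero_iff_norm.mp x.2)⟩

end PaperTC

open PaperTC

/-!
A motion planner on all of `X × X` contracts `X`, so the lower bound says that a sphere is not
contractible. A contraction extends the identity of the sphere to a continuous map of the whole
space into the sphere; after smoothing this is a `C¹` retraction `r` of the closed ball onto its
boundary. Following Milnor and Rogers, `∫ det (t + (r' - 1))` over the ball is a polynomial in
`t`. For large `t` the map `x ↦ x + t⁻¹ (r x - x)` is a small perturbation of the identity which
permutes the ball, so the polynomial is `t ^ n` times the volume of the ball. Its value `∫ det r'`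
at `t = 1` is therefore positive, whereas `det r' = 0` because `‖r‖` is constant.

For the upper bound, a connected fixed set contains a fixed unit vector `e` together with `-e`,
hence infinitely many points, and in particular some `f ≠ ± e`. When `v` is a fixed vector,
projecting the path `(1 - t) x + t y + t (1 - t) v` radially to the sphere is an equivariant
motion planner on the open set of pairs `(x, y)` for which the path avoids `0`. For `v = 0` these
are the pairs with `y ≠ -x`; a pair `(x, -x)` is handled by `v = e` if `x ≠ ± e`, and by `v = f`
otherwise.
-/

open MeasureTheory Metric
open scoped NNReal Polynomial

section LipschitzPerturbation

theorem nonempty_inter_frontier_of_isPreconnected {X : Type*} [TopologicalSpace X] {s t : Set X}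
    (ht : IsPreconnected t) (hts : (t ∩ s).Nonempty) (hts' : (t \ s).Nonempty) :
    (t ∩ frontier s).Nonempty := by
  by_contra! hempty
  have hfrontier : ∀ x ∈ t, x ∈ closure s → x ∈ interior s := fun x hxt hx ↦ by
    by_contra hx'
    exact notMem_empty x (hempty ▸ ⟨hxt, hx, hx'⟩)
  obtain ⟨x, hxt, hxs⟩ := hts
  obtain ⟨y, hyt, hys⟩ := hts'
  obtain ⟨z, -, hzi, hzc⟩ := ht (interior s) (closure s)ᶜ isOpen_interior
    isClosed_closure.isOpen_compl
    (fun z hz ↦ (em (z ∈ closure s)).imp_left (hfrontier z hz))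
    ⟨x, hxt, hfrontier x hxt (subset_closure hxs)⟩
    ⟨y, hyt, fun hy ↦ hys (interior_subset (hfrontier y hyt hy))⟩
  exact hzc (interior_subset_closure hzi)

theorem lipschitzWith_indicator_of_eq_zero_on_frontier {E F : Type*} [SeminormedAddCommGroup E]
    [NormedSpace ℝ E] [SeminormedAddCommGroup F] {s : Set E} {f : E → F} {K : ℝ≥0}
    (hs : IsClosed s) (hf : LipschitzOnWith K f s) (hf₀ : ∀ x ∈ frontier s, f x = 0) :
    LipschitzWith K (s.indicator f) := by
  have hcross : ∀ x ∈ s, ∀ y ∉ s, dist (f x) 0 ≤ K * dist x y := by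
    intro x hx y hy
    obtain ⟨z, hz, hzs⟩ := nonempty_inter_frontier_of_isPreconnected
      (convex_segment x y).isPreconnected ⟨x, left_mem_segment ℝ x y, hx⟩
      ⟨y, right_mem_segment ℝ x y, hy⟩
    calc dist (f x) 0 = dist (f x) (f z) := by rw [hf₀ z hzs]
      _ ≤ K * dist x z := hf.dist_le_mul x hx z (hs.frontier_subset hzs)
      _ ≤ K * dist x y := by
        gcongr
        linarith [dist_add_dist_of_mem_segment hz, dist_nonneg (x := z) (y := y)]
  refine LipschitzWith.of_dist_le_mul fun x y ↦ ?_
  by_cases hx : x ∈ s <;> by_cases hy : y ∈ s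
  · simpa [hx, hy] using hf.dist_le_mul x hx y hy
  · simpa [hx, hy] using hcross x hx y hy
  · simpa [hx, hy, dist_comm] using hcross y hy x hx
  · simpa [hx, hy] using by positivity

theorem bijective_id_add_of_contractingWith {E : Type*} [NormedAddCommGroup E] [CompleteSpace E]
    {g : E → E} {K : ℝ≥0} (hg : ContractingWith K g) :
    Function.Bijective fun x ↦ x + g x := by
  have hcontr (y : E) : ContractingWith K fun x ↦ y - g x :=
    ⟨hg.1, by simpa using (LipschitzWith.const y).sub hg.2⟩
  constructor
  · intro x y hxy
    exact (hcontr (x + g x)).fixedPoint_unique' (add_sub_cancel_right x (g x))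
      (sub_eq_of_eq_add hxy)
  · intro y
    exact ⟨_, (eq_sub_iff_add_eq.mp (hcontr y).fixedPoint_isFixedPt.symm)⟩

theorem image_eq_self_of_eqOn_id_compl {α : Type*} {f : α → α} {s : Set α}
    (hf : Function.Bijective f) (hs : EqOn f id sᶜ) : f '' s = s := by
  rw [← compl_inj_iff, ← image_compl_eq hf, hs.image_eq, image_id]

end LipschitzPerturbation

section JacobianIntegral

variable {E : Type*} [NormedAddCommGroup E] [NormedSpace ℝ E] [FiniteDimensional ℝ E]

theorem det_one_add_pos_of_norm_lt_one {A : E →L[ℝ] E} (hA : ‖A‖ < 1) : 0 < (1 + A).det := by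
  have := FiniteDimensional.complete ℝ E
  by_contra! hneg
  have hcont : ContinuousOn (fun t : ℝ ↦ (1 + t • A).det) (Icc 0 1) :=
    (ContinuousLinearMap.continuous_det.comp (by fun_prop)).continuousOn
  have hone : (1 + (0 : ℝ) • A).det = 1 := by
    rw [zero_smul, add_zero]
    exact LinearMap.det_id
  obtain ⟨t, ht, hdet⟩ := intermediate_value_Icc' zero_le_one hcont
    (show (0 : ℝ) ∈ _ from ⟨by simpa using hneg, hone.symm ▸ zero_le_one⟩)
  have hnorm : ‖-(t • A)‖ < 1 := by
    rw [norm_neg, norm_smul, Real.norm_of_nonneg ht.1]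
    exact (mul_le_of_le_one_left (norm_nonneg A) ht.2).trans_lt hA
  have hunit : IsUnit (1 + t • A) := by simpa using isUnit_one_sub_of_norm_lt_one hnorm
  have hunit_det := (LinearMap.isUnit_iff_isUnit_det _).mp
    (ContinuousLinearMap.isUnit_iff_isUnit_toLinearMap.mp hunit)
  exact hunit_det.ne_zero hdet

theorem eval_charpoly_neg (A : E →L[ℝ] E) (t : ℝ) :
    (-(A : E →ₗ[ℝ] E)).charpoly.eval t = (t • 1 + A).det := by
  rw [LinearMap.eval_charpoly, sub_neg_eq_add]
  rfl

variable [MeasurableSpace E] [BorelSpace E] (μ : Measure E) [μ.IsAddHaarMeasure]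

theorem setIntegral_det_one_add_of_nnnorm_le {s : Set E} {g : E → E} {g' : E → E →L[ℝ] E} {K : ℝ≥0}
    (hs : IsClosed s) (hconv : Convex ℝ s) (hK : K < 1)
    (hg : ∀ x ∈ s, HasFDerivWithinAt g (g' x) s x) (hg' : ∀ x ∈ s, ‖g' x‖₊ ≤ K)
    (hg₀ : ∀ x ∈ frontier s, g x = 0) :
    ∫ x in s, (1 + g' x).det ∂μ = μ.real s := by
  have := FiniteDimensional.complete ℝ E
  let f : E → E := fun x ↦ x + s.indicator g x
  have hlip : LipschitzWith K (s.indicator g) := lipschitzWith_indicator_of_eq_zero_on_frontier hs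
    (hconv.lipschitzOnWith_of_nnnorm_hasFDerivWithin_le hg hg') hg₀
  have hbij : Function.Bijective f := bijective_id_add_of_contractingWith ⟨hK, hlip⟩
  have himage : f '' s = s := image_eq_self_of_eqOn_id_compl hbij fun x hx ↦ by
    simp [f, indicator_of_notMem hx]
  have hderiv : ∀ x ∈ s, HasFDerivWithinAt f (1 + g' x) s x := fun x hx ↦
    ((hasFDerivWithinAt_id x s).add (hg x hx)).congr
      (fun y hy ↦ by simp [f, hy]) (by simp [f, hx])
  have hpos : ∀ x ∈ s, 0 < (1 + g' x).det := fun x hx ↦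
    det_one_add_pos_of_norm_lt_one ((NNReal.coe_le_coe.mpr (hg' x hx)).trans_lt hK)
  calc ∫ x in s, (1 + g' x).det ∂μ = ∫ x in s, |(1 + g' x).det| • (1 : ℝ) ∂μ :=
        setIntegral_congr_fun hs.measurableSet fun x hx ↦ by
          simp only [abs_of_pos (hpos x hx), smul_eq_mul, mul_one]
    _ = ∫ _ in f '' s, (1 : ℝ) ∂μ := (integral_image_eq_integral_abs_det_fderiv_smul μ
        hs.measurableSet hderiv hbij.injective.injOn fun _ ↦ (1 : ℝ)).symm
    _ = μ.real s := by rw [himage]; simp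

theorem exists_polynomial_eval_eq_integral {α : Type*} [MeasurableSpace α] {ν : Measure α} {N : ℕ}
    {p : α → ℝ[X]} (hdeg : ∀ x, (p x).natDegree ≤ N)
    (hint : ∀ t, Integrable (fun x ↦ (p x).eval t) ν) :
    ∃ q : ℝ[X], ∀ t, q.eval t = ∫ x, (p x).eval t ∂ν := by
  let nodes := Finset.range (N + 1)
  let node : ℕ → ℝ := (↑)
  have hinterp (x : α) : p x = Lagrange.interpolate nodes node fun i ↦ (p x).eval (node i) :=
    Lagrange.eq_interpolate Nat.cast_injective.injOn
      (Polynomial.degree_le_natDegree.trans_lt (by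
        rw [Finset.card_range]
        exact_mod_cast Nat.lt_succ_of_le (hdeg x)))
  refine ⟨Lagrange.interpolate nodes node fun i ↦ ∫ x, (p x).eval (node i) ∂ν, fun t ↦ ?_⟩
  have heval (r : ℕ → ℝ) : (Lagrange.interpolate nodes node r).eval t =
      ∑ i ∈ nodes, r i * (Lagrange.basis nodes node i).eval t := by
    simp [Lagrange.interpolate_apply, Polynomial.eval_finsetSum]
  calc (Lagrange.interpolate nodes node fun i ↦ ∫ x, (p x).eval (node i) ∂ν).eval t
    _ = ∑ i ∈ nodes, ∫ x, (p x).eval (node i) * (Lagrange.basis nodes node i).eval t ∂ν := by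
      simp only [heval, integral_mul_const]
    _ = ∫ x, ∑ i ∈ nodes, (p x).eval (node i) * (Lagrange.basis nodes node i).eval t ∂ν :=
      (integral_finsetSum _ fun i _ ↦ (hint (node i)).mul_const _).symm
    _ = ∫ x, (p x).eval t ∂ν := integral_congr_ae <| .of_forall fun x ↦
      (heval _).symm.trans (congrArg (Polynomial.eval t) (hinterp x).symm)

theorem setIntegral_det_of_eq_id_on_frontier {s : Set E} {r : E → E} {r' : E → E →L[ℝ] E}
    (hs : IsCompact s) (hconv : Convex ℝ s) (hr : ∀ x ∈ s, HasFDerivWithinAt r (r' x) s x)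
    (hr' : ContinuousOn r' s) (hfrontier : ∀ x ∈ frontier s, r x = x) :
    ∫ x in s, (r' x).det ∂μ = μ.real s := by
  let A : E → E →L[ℝ] E := fun x ↦ r' x - 1
  have hA : ContinuousOn A s := hr'.sub continuousOn_const
  let p : E → ℝ[X] := fun x ↦ (-(A x : E →ₗ[ℝ] E)).charpoly
  have hp (x : E) (t : ℝ) : (p x).eval t = (t • 1 + A x).det := eval_charpoly_neg (A x) t
  obtain ⟨q, hq⟩ := exists_polynomial_eval_eq_integral (ν := μ.restrict s) (p := p)
    (fun x ↦ (LinearMap.charpoly_natDegree _).le) fun t ↦ by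
      simp only [hp]
      exact (ContinuousLinearMap.continuous_det.comp_continuousOn
        (continuousOn_const.add hA)).integrableOn_compact hs
  simp only [hp] at hq
  obtain ⟨C, hC⟩ := hs.exists_bound_of_continuousOn hA
  have hlarge : ∀ t > max C 0, q.eval t = t ^ Module.finrank ℝ E * μ.real s := by
    intro t ht
    have ht₀ : 0 < t := (le_max_right C 0).trans_lt ht
    have hscale (x : E) :
        (t • 1 + A x).det = t ^ Module.finrank ℝ E * (1 + t⁻¹ • A x).det := by
      have : t • 1 + A x = t • (1 + t⁻¹ • A x) := by rw [smul_add, smul_inv_smul₀ ht₀.ne']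
      rw [this]
      exact LinearMap.det_smul t _
    have hbound : ∀ x ∈ s, ‖t⁻¹ • A x‖₊ ≤ (max C 0 / t).toNNReal := fun x hx ↦ by
      rw [← norm_toNNReal, norm_smul, norm_inv, Real.norm_of_nonneg ht₀.le, inv_mul_eq_div]
      gcongr
      exact (hC x hx).trans (le_max_left C 0)
    simp only [hq, hscale, integral_const_mul]
    congr 1
    exact setIntegral_det_one_add_of_nnnorm_le μ (g := fun x ↦ t⁻¹ • (r x - x)) hs.isClosed hconv
      (Real.toNNReal_lt_one.mpr ((div_lt_one ht₀).mpr ht))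
      (fun x hx ↦ ((hr x hx).sub (hasFDerivWithinAt_id x s)).const_smul t⁻¹) hbound
      fun x hx ↦ by simp [hfrontier x hx]
  have hq_eq : q = Polynomial.X ^ Module.finrank ℝ E * Polynomial.C (μ.real s) :=
    Polynomial.eq_of_infinite_eval_eq _ _ <| (Ioi_infinite (max C 0)).mono fun t ht ↦
      (hlarge t ht).trans (by
        simp only [Polynomial.eval_mul, Polynomial.eval_pow, Polynomial.eval_X, Polynomial.eval_C])
  calc ∫ x in s, (r' x).det ∂μ = q.eval 1 := by simp [hq, A]
    _ = μ.real s := by simp [hq_eq]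

end JacobianIntegral

section NoRetraction

variable {E : Type*} [NormedAddCommGroup E] [InnerProductSpace ℝ E] [FiniteDimensional ℝ E]

theorem det_eq_zero_of_norm_eq_const {s : Set E} {x : E} {r : E → E} {r' : E →L[ℝ] E} {c : ℝ}
    (hs : UniqueDiffWithinAt ℝ s x) (hx : x ∈ s) (hr : HasFDerivWithinAt r r' s x)
    (hc : c ≠ 0) (hnorm : ∀ y ∈ s, ‖r y‖ = c) : r'.det = 0 := by
  by_contra hdet
  obtain ⟨v, hv⟩ := (LinearMap.equivOfDetNeZero (r' : E →ₗ[ℝ] E) hdet).surjective (r x)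
  replace hv : r' v = r x := hv
  have hconst : HasFDerivWithinAt (fun y ↦ inner ℝ (r y) (r y)) (0 : E →L[ℝ] ℝ) s x :=
    (hasFDerivWithinAt_const (c ^ 2) x s).congr
      (fun y hy ↦ by rw [real_inner_self_eq_norm_sq, hnorm y hy])
      (by rw [real_inner_self_eq_norm_sq, hnorm x hx])
  have hzero := congrArg (fun L : E →L[ℝ] ℝ ↦ L v) (hs.eq (hr.inner ℝ hr) hconst)
  simp [hv, hnorm x hx, hc] at hzero

theorem exists_mem_sphere_ne_of_contDiffOn {r : E → E}
    (hr : ContDiffOn ℝ 1 r (closedBall 0 1))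
    (hmaps : MapsTo r (closedBall 0 1) (sphere 0 1)) : ∃ x ∈ sphere (0 : E) 1, r x ≠ x := by
  by_contra! hid
  borelize E
  have hball : (interior (closedBall (0 : E) 1)).Nonempty :=
    ⟨0, ball_subset_interior_closedBall (mem_ball_self one_pos)⟩
  have hunique := uniqueDiffOn_convex (convex_closedBall (0 : E) 1) hball
  have hderiv : ∀ x ∈ closedBall (0 : E) 1,
      HasFDerivWithinAt r (fderivWithin ℝ r (closedBall 0 1) x) (closedBall 0 1) x :=
    fun x hx ↦ (hr.differentiableOn one_ne_zero x hx).hasFDerivWithinAt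
  have hdet : ∀ x ∈ closedBall (0 : E) 1, (fderivWithin ℝ r (closedBall 0 1) x).det = 0 :=
    fun x hx ↦ det_eq_zero_of_norm_eq_const (hunique x hx) hx (hderiv x hx) one_ne_zero
      fun y hy ↦ mem_sphere_zero_iff_norm.mp (hmaps hy)
  have hvolume := setIntegral_det_of_eq_id_on_frontier (volume : Measure E)
    (isCompact_closedBall 0 1) (convex_closedBall 0 1) hderiv
    (hr.continuousOn_fderivWithin hunique le_rfl)
    (by simpa only [frontier_closedBall (0 : E) one_ne_zero] using hid)
  rw [setIntegral_congr_fun measurableSet_closedBall hdet, integral_zero] at hvolume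
  exact (ENNReal.toReal_pos (measure_closedBall_pos _ _ one_pos).ne'
    measure_closedBall_lt_top.ne).ne hvolume

theorem exists_mem_sphere_ne_of_continuous_of_ne_zero {f : E → E} (hf : Continuous f)
    (hf₀ : ∀ x, f x ≠ 0) : ∃ x ∈ sphere (0 : E) 1, f x ≠ x := by
  by_contra! hid
  obtain ⟨g, hg, hdist, hsupport⟩ := (hf.sub continuous_id).exists_contDiff_approx 1
    hf.norm fun x ↦ norm_pos_iff.mpr (hf₀ x)
  have hg_sphere : ∀ x ∈ sphere (0 : E) 1, g x = 0 := fun x hx ↦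
    Function.notMem_support.mp fun hgx ↦ hsupport hgx (by simp [hid x hx])
  have hne (x : E) : x + g x ≠ 0 := fun h ↦ by
    have hdist_eq : dist (g x) (f x - x) = ‖f x‖ := by
      rw [eq_neg_of_add_eq_zero_right h, dist_eq_norm, ← norm_neg]
      congr 1
      abel
    exact (hdist x).ne hdist_eq
  have hsmooth : ContDiff ℝ 1 fun x ↦ x + g x := contDiff_id.add hg
  obtain ⟨x, hx, hfix⟩ := exists_mem_sphere_ne_of_contDiffOn
    (r := fun x ↦ ‖x + g x‖⁻¹ • (x + g x))
    (((hsmooth.norm ℝ hne).inv fun x ↦ norm_ne_zero_iff.mpr (hne x)).smul hsmooth).contDiffOn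
    fun x _ ↦ mem_sphere_zero_iff_norm.mpr (norm_smul_inv_norm (𝕜 := ℝ) (hne x))
  exact hfix (by simp [hg_sphere x hx, mem_sphere_zero_iff_norm.mp hx])

end NoRetraction

section Contractibility

variable {E : Type*} [NormedAddCommGroup E] [NormedSpace ℝ E]

/-- The radial projection `v ↦ v / ‖v‖` of the punctured space `E ∖ {0}` onto the unit sphere. -/
noncomputable def radialProjection : C(({0}ᶜ : Set E), sphere (0 : E) 1) :=
  ⟨fun v ↦ (homeomorphUnitSphereProd E v).1, by fun_prop⟩

theorem coe_radialProjection (v : ({0}ᶜ : Set E)) :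
    (radialProjection v : E) = ‖(v : E)‖⁻¹ • (v : E) :=
  homeomorphUnitSphereProd_apply_fst_coe E v

theorem radialProjection_eq_of_coe_eq (v : ({0}ᶜ : Set E)) (x : sphere (0 : E) 1)
    (hvx : (v : E) = x) : radialProjection v = x :=
  Subtype.ext (by simp [coe_radialProjection, hvx])

theorem exists_extension_of_nullhomotopic {Y : Type*} [TopologicalSpace Y]
    {f : C(sphere (0 : E) 1, Y)} (hf : f.Nullhomotopic) :
    ∃ F : C(E, Y), ∀ x : sphere (0 : E) 1, F x = f x := by
  classical
  obtain ⟨y, ⟨H⟩⟩ := hf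
  -- `H` runs radially inwards, from `f` at norm `1` to the constant `y` at norm `1 / 2`.
  let time : E → I := fun x ↦ projIcc 0 1 zero_le_one (2 - 2 * ‖x‖)
  have htime : Continuous time := continuous_projIcc.comp (by fun_prop)
  let F : E → Y := fun x ↦
    if hx : x ∈ ({0}ᶜ : Set E) then H (time x, radialProjection ⟨x, hx⟩) else y
  have hF_punctured : ContinuousOn F {0}ᶜ := by
    rw [continuousOn_iff_continuous_domRestrict, domRestrict_dite]
    exact H.continuous.comp
      ((htime.comp continuous_subtype_val).prodMk radialProjection.continuous)
  have hF_ball : ContinuousOn F (ball 0 (1 / 2)) := by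
    refine (continuousOn_const (c := y)).congr fun x hx ↦ ?_
    have htime_one : time x = 1 := projIcc_of_right_le _ (by linarith [mem_ball_zero_iff.mp hx])
    simp [F, htime_one]
  have hcover : ({0}ᶜ ∪ ball 0 (1 / 2) : Set E) = univ := by
    refine eq_univ_of_forall fun x ↦ ?_
    rcases eq_or_ne x 0 with rfl | hx
    · simp
    · exact .inl hx
  refine ⟨⟨F, ?_⟩, fun x ↦ ?_⟩
  · rw [← continuousOn_univ, ← hcover]
    exact hF_punctured.union_of_isOpen hF_ball isOpen_compl_singleton isOpen_ball
  · have hx : (x : E) ∈ ({0}ᶜ : Set E) := ne_zero_of_mem_unit_sphere x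
    have htime_zero : time (x : E) = 0 := projIcc_of_le_left _ (by simp)
    calc F x = H (time (x : E), radialProjection ⟨x, hx⟩) := dif_pos hx
      _ = f x := by
        rw [htime_zero, radialProjection_eq_of_coe_eq ⟨_, hx⟩ x rfl, H.apply_zero]

end Contractibility

theorem not_contractibleSpace_sphere {E : Type*} [NormedAddCommGroup E] [InnerProductSpace ℝ E]
    [FiniteDimensional ℝ E] : ¬ ContractibleSpace (sphere (0 : E) 1) := by
  intro hcontr
  obtain ⟨F, hF⟩ := exists_extension_of_nullhomotopic (id_nullhomotopic (sphere (0 : E) 1))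
  obtain ⟨x, hx, hne⟩ := exists_mem_sphere_ne_of_continuous_of_ne_zero
    (continuous_subtype_val.comp F.continuous) fun x ↦ ne_zero_of_mem_unit_sphere (F x)
  exact hne (congrArg Subtype.val (hF ⟨x, hx⟩))

namespace PaperTC

variable {G X : Type*}

theorem fixedSetOf_univ (act : G → X → X) : fixedSetOf act univ = fixedSet act := by
  simp [fixedSetOf, fixedSet]

theorem two_le_minCover {P : ℕ → Prop} (h : ¬ P 1) : 2 ≤ minCover P := by
  refine le_sInf ?_
  rintro _ ⟨m, rfl, hm, hPm⟩
  have hm' : m ≠ 1 := fun hm₁ ↦ h (hm₁ ▸ hPm)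
  exact_mod_cast (by omega : 2 ≤ m)

theorem minCover_le {P : ℕ → Prop} {k : ℕ} (hk : 1 ≤ k) (h : P k) : minCover P ≤ k :=
  sInf_le ⟨k, rfl, hk, h⟩

section MotionPlanners

variable [TopologicalSpace X] {act : G → X → X}

theorem contractibleSpace_of_eqTCcover_one [Nonempty X] (h : eqTCcover act 1) :
    ContractibleSpace X := by
  obtain ⟨U, -, hU, hplan⟩ := h
  obtain ⟨-, s, hs, hends, -⟩ := hplan 0
  have hU₀ : U 0 = univ := (iSup_unique (f := U)).symm.trans hU
  simp only [hU₀, continuousOn_univ, mem_univ, true_imp_iff] at hs hends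
  let x₀ : X := Classical.arbitrary X
  let H : C(I × X, X) := ⟨fun q ↦ s (q.2, x₀) q.1, (hs.comp (by fun_prop)).eval continuous_fst⟩
  exact (contractible_iff_id_nullhomotopic X).mpr
    ⟨x₀, ⟨⟨H, fun x ↦ (hends (x, x₀)).1, fun x ↦ (hends (x, x₀)).2⟩⟩⟩

theorem two_le_eqTC [Nonempty X] (act : G → X → X) (hX : ¬ ContractibleSpace X) : 2 ≤ eqTC act :=
  two_le_minCover fun h ↦ hX (contractibleSpace_of_eqTCcover_one h)

/-- `U` is invariant under the diagonal action and admits an equivariant motion planner: the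
condition imposed in `eqTCcover` on each member of the cover, apart from openness. -/
def HasEquivariantMotionPlanner (act : G → X → X) (U : Set (X × X)) : Prop :=
  (∀ g p, p ∈ U → (act g p.1, act g p.2) ∈ U) ∧
    ∃ s : X × X → C(I, X), ContinuousOn s U ∧ (∀ p ∈ U, s p 0 = p.1 ∧ s p 1 = p.2) ∧
      ∀ g p, p ∈ U → ∀ t : I, s (act g p.1, act g p.2) t = act g (s p t)

theorem hasEquivariantMotionPlanner_of_continuousMap {U : Set (X × X)} (F : C(U × I, X))
    (hU : ∀ g p, p ∈ U → (act g p.1, act g p.2) ∈ U) (hzero : ∀ p, F (p, 0) = p.1.1)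
    (hone : ∀ p, F (p, 1) = p.1.2)
    (hequiv : ∀ g (p : U) t, F (⟨_, hU g p p.2⟩, t) = act g (F (p, t))) :
    HasEquivariantMotionPlanner act U := by
  classical
  let s : X × X → C(I, X) := fun p ↦
    if hp : p ∈ U then F.curry ⟨p, hp⟩ else ContinuousMap.const I p.1
  have hs (p : X × X) (hp : p ∈ U) (t : I) : s p t = F (⟨p, hp⟩, t) := by
    simp only [s, dif_pos hp, ContinuousMap.curry_apply]
  refine ⟨hU, s, ?_, fun p hp ↦ ⟨(hs p hp 0).trans (hzero _), (hs p hp 1).trans (hone _)⟩,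
    fun g p hp t ↦ ?_⟩
  · rw [continuousOn_iff_continuous_domRestrict, domRestrict_dite]
    exact F.curry.continuous
  · rw [hs _ (hU g p hp), hs p hp]
    exact hequiv g ⟨p, hp⟩ t

end MotionPlanners

section BentSegments

variable {E : Type*}

/-- The path `t ↦ (1 - t) x + t y + t (1 - t) v`, the segment from `x` to `y` bent in the direction
of `v`. It commutes with every linear map that fixes `v`. -/
def bentSegment [AddCommGroup E] [Module ℝ E] (v x y : E) (t : ℝ) : E :=
  AffineMap.lineMap x y t + (t * (1 - t)) • v

section Module

variable [AddCommGroup E] [Module ℝ E] (v x y : E)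

@[simp] theorem bentSegment_apply_zero : bentSegment v x y 0 = x := by simp [bentSegment]

@[simp] theorem bentSegment_apply_one : bentSegment v x y 1 = y := by simp [bentSegment]

@[simp] theorem bentSegment_zero (t : ℝ) : bentSegment 0 x y t = AffineMap.lineMap x y t := by
  simp [bentSegment]

theorem map_bentSegment {F : Type*} [AddCommGroup F] [Module ℝ F] (f : E →ₗ[ℝ] F) (t : ℝ) :
    f (bentSegment v x y t) = bentSegment (f v) (f x) (f y) t := by
  simp [bentSegment, AffineMap.lineMap_apply_module]

theorem bentSegment_neg_ne_zero {v x : E} (h : LinearIndependent ℝ ![x, v]) (t : ℝ) :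
    bentSegment v x (-x) t ≠ 0 := by
  intro hzero
  obtain ⟨hx, hv⟩ := LinearIndependent.pair_iff.mp h (1 - 2 * t) (t * (1 - t)) (by
    rw [← hzero, bentSegment, AffineMap.lineMap_apply_module]
    module)
  nlinarith

end Module

variable [NormedAddCommGroup E] [NormedSpace ℝ E]

theorem lineMap_ne_zero_of_norm_eq {x y : E} (hnorm : ‖x‖ = ‖y‖) (hne : y ≠ -x)
    (t : I) : AffineMap.lineMap x y (t : ℝ) ≠ 0 := by
  intro hzero
  have hmem : (0 : E) ∈ segment ℝ x y := by
    rw [segment_eq_image_lineMap]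
    exact ⟨t, t.2, hzero⟩
  have hray : SameRay ℝ (-x) y := by simpa using sameRay_of_mem_segment hmem
  exact hne (hray.eq_of_norm_eq (by rwa [norm_neg])).symm

theorem linearIndependent_pair_of_norm_eq {x y : E} (hnorm : ‖x‖ = ‖y‖) (hne : x ≠ y)
    (hne_neg : x ≠ -y) : LinearIndependent ℝ ![x, y] := by
  by_contra hdep
  rcases sameRay_or_sameRay_neg_iff_not_linearIndependent.mpr hdep with hray | hray
  · exact hne (hray.eq_of_norm_eq hnorm)
  · exact hne_neg (hray.eq_of_norm_eq (by rwa [norm_neg]))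

@[fun_prop]
theorem continuous_bentSegment {Y : Type*} [TopologicalSpace Y] (v : E) {x y : Y → E} {t : Y → ℝ}
    (hx : Continuous x) (hy : Continuous y) (ht : Continuous t) :
    Continuous fun a ↦ bentSegment v (x a) (y a) (t a) := by
  simp only [bentSegment, AffineMap.lineMap_apply_module]
  fun_prop

/-- The pairs of unit vectors whose segment bent in the direction of `v` avoids the origin, and can
hence be projected radially onto the unit sphere. -/
def bentSegmentDomain (v : E) : Set (sphere (0 : E) 1 × sphere (0 : E) 1) :=
  {p | ∀ t : I, bentSegment v (p.1 : E) p.2 t ≠ 0}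

theorem isOpen_bentSegmentDomain (v : E) : IsOpen (bentSegmentDomain v) := by
  let zeros : Set ((sphere (0 : E) 1 × sphere (0 : E) 1) × I) :=
    {q | bentSegment v (q.1.1 : E) q.1.2 q.2 = 0}
  have hzeros : IsClosed zeros := isClosed_eq (by fun_prop) continuous_const
  have himage : bentSegmentDomain v = (Prod.fst '' zeros)ᶜ := by
    ext p
    simp [bentSegmentDomain, zeros]
  rw [himage]
  exact (isClosedMap_fst_of_compactSpace _ hzeros).isOpen_compl

theorem mem_bentSegmentDomain_zero {x y : sphere (0 : E) 1} (hxy : y ≠ -x) :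
    (x, y) ∈ bentSegmentDomain (0 : E) := fun t ↦ by
  simpa using lineMap_ne_zero_of_norm_eq (by simp) (fun h ↦ hxy (Subtype.ext h)) t

theorem mem_bentSegmentDomain_neg {x v : sphere (0 : E) 1} (hxv : x ≠ v) (hxv' : x ≠ -v) :
    (x, -x) ∈ bentSegmentDomain (v : E) := fun t ↦
  bentSegment_neg_ne_zero (linearIndependent_pair_of_norm_eq (by simp)
    (Subtype.coe_ne_coe.mpr hxv) fun h ↦ hxv' (Subtype.ext h)) t

variable {ρ : G → E →ₗᵢ[ℝ] E} {act : G → sphere (0 : E) 1 → sphere (0 : E) 1}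

theorem hasEquivariantMotionPlanner_bentSegmentDomain (hact : ∀ g x, (act g x : E) = ρ g x)
    {v : E} (hv : ∀ g, ρ g v = v) : HasEquivariantMotionPlanner act (bentSegmentDomain v) := by
  have hmap (g : G) (x y : E) (t : ℝ) :
      bentSegment v (ρ g x) (ρ g y) t = ρ g (bentSegment v x y t) := by
    simpa [hv g] using (map_bentSegment v x y (ρ g).toLinearMap t).symm
  have hinv (g : G) (p) (hp : p ∈ bentSegmentDomain v) :
      (act g p.1, act g p.2) ∈ bentSegmentDomain v := fun t ↦ by
    simpa only [hact, hmap, ne_eq, map_eq_zero_iff _ (ρ g).injective] using hp t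
  let path : C(bentSegmentDomain v × I, ({0}ᶜ : Set E)) :=
    ⟨fun q ↦ ⟨bentSegment v (q.1.1.1 : E) q.1.1.2 q.2, q.1.2 q.2⟩, by fun_prop⟩
  refine hasEquivariantMotionPlanner_of_continuousMap (radialProjection.comp path) hinv
    (fun p ↦ radialProjection_eq_of_coe_eq _ _ (by simp [path]))
    (fun p ↦ radialProjection_eq_of_coe_eq _ _ (by simp [path])) fun g p t ↦ Subtype.ext ?_
  simp [path, coe_radialProjection, hmap, hact]

theorem eqTC_le_of_iUnion_bentSegmentDomain (hact : ∀ g x, (act g x : E) = ρ g x) {k : ℕ}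
    (hk : 1 ≤ k) (v : Fin k → E) (hv : ∀ i g, ρ g (v i) = v i)
    (hcover : ⋃ i, bentSegmentDomain (v i) = univ) : eqTC act ≤ k :=
  minCover_le hk ⟨_, fun i ↦ isOpen_bentSegmentDomain (v i), hcover,
    fun i ↦ hasEquivariantMotionPlanner_bentSegmentDomain hact (hv i)⟩

theorem eqTC_le_three_of_mem_fixedSet (hact : ∀ g x, (act g x : E) = ρ g x)
    {e f : sphere (0 : E) 1} (he : e ∈ fixedSet act) (hf : f ∈ fixedSet act) (hne : f ≠ e)
    (hne_neg : f ≠ -e) : eqTC act ≤ 3 := by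
  have hfix {x : sphere (0 : E) 1} (hx : x ∈ fixedSet act) (g : G) : ρ g x = x := by
    rw [← hact, hx g]
  refine eqTC_le_of_iUnion_bentSegmentDomain hact (by norm_num : 1 ≤ 3) ![0, e, f]
    (by simp [Fin.forall_fin_succ, hfix he, hfix hf]) (iUnion_eq_univ_iff.mpr ?_)
  rintro ⟨x, y⟩
  rcases ne_or_eq y (-x) with hy | rfl
  · exact ⟨0, mem_bentSegmentDomain_zero hy⟩
  by_cases hx : x = e ∨ x = -e
  · have hxf : x ≠ f ∧ x ≠ -f := by
      rcases hx with rfl | rfl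
      · exact ⟨hne.symm, fun h ↦ hne_neg (by rw [h, neg_neg])⟩
      · exact ⟨hne_neg.symm, fun h ↦ hne (neg_injective h).symm⟩
    exact ⟨2, mem_bentSegmentDomain_neg hxf.1 hxf.2⟩
  · obtain ⟨hxe, hxe'⟩ := not_or.mp hx
    exact ⟨1, mem_bentSegmentDomain_neg hxe hxe'⟩

theorem exists_mem_fixedSet_ne_of_isConnected (hact : ∀ g x, (act g x : E) = ρ g x)
    (hconn : IsConnected (fixedSet act)) :
    ∃ e ∈ fixedSet act, ∃ f ∈ fixedSet act, f ≠ e ∧ f ≠ -e := by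
  obtain ⟨e, he⟩ := hconn.nonempty
  have hneg : -e ∈ fixedSet act := fun g ↦ Subtype.ext <| by
    simp [hact, ← hact g e, he g]
  obtain ⟨f, hf, hfe⟩ := (hconn.isPreconnected.infinite_of_nontrivial
    ⟨e, he, -e, hneg, ne_neg_of_mem_unit_sphere ℝ e⟩).exists_notMem_finite (toFinite {e, -e})
  exact ⟨e, he, f, hf, by simpa using hfe⟩

end BentSegments

end PaperTC

theorem eqTC_linear_sphere_between_two_and_three_general {G E : Type*} [NormedAddCommGroup E]
    [InnerProductSpace ℝ E] [FiniteDimensional ℝ E] (ρ : G → E →ₗᵢ[ℝ] E)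
    (act : G → sphere (0 : E) 1 → sphere (0 : E) 1) (hact : ∀ g x, (act g x : E) = ρ g x)
    (hconn : IsConnected (fixedSet act)) : 2 ≤ eqTC act ∧ eqTC act ≤ 3 := by
  obtain ⟨e, he, f, hf, hne, hne_neg⟩ := exists_mem_fixedSet_ne_of_isConnected hact hconn
  have : Nonempty (sphere (0 : E) 1) := ⟨e⟩
  exact ⟨two_le_eqTC act not_contractibleSpace_sphere,
    eqTC_le_three_of_mem_fixedSet hact he hf hne hne_neg⟩

/-- If a finite group `G` acts linearly on a `G`-connected sphere `S^n` with
non-empty fixed point set, then `2 ≤ TC_G(S^n) ≤ 3`. -/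
theorem eqTC_linear_sphere_between_two_and_three {G : Type*} [Group G] [Finite G]
    (n : ℕ) (hn : 1 ≤ n)
    (ρ : G →* (EuclideanSpace ℝ (Fin (n + 1)) ≃ₗᵢ[ℝ] EuclideanSpace ℝ (Fin (n + 1))))
    (hconn : ∀ H : Subgroup G, IsPathConnected (fixedSetOf (sphereAct ρ) (H : Set G)))
    (hfix : (fixedSet (sphereAct ρ)).Nonempty) :
    2 ≤ eqTC (sphereAct ρ) ∧ eqTC (sphereAct ρ) ≤ 3 :=
  eqTC_linear_sphere_between_two_and_three_general (fun g ↦ (ρ g).toLinearIsometry) (sphereAct ρ)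
    (fun _ _ ↦ rfl) (by simpa [fixedSetOf_univ] using (hconn ⊤).isConnected)
end
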